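/- Let $c > 0$, $k < 0$, $\rho_0 > 0$, $\omega = \sqrt{-ck}$, and suppose $u_0' \geq -(1 - \rho_0/c)\omega$. Then the function $\Gamma(t) = \dfrac{\rho_0}{c} + \dfrac{1}{2}\big(1 - \tfrac{\rho_0}{c} - \tfrac{u_0'}{\omega}\big) e^{-\omega t} + \dfrac{1}{2}\big(1 - \tfrac{\rho_0}{c} + \tfrac{u_0'}{\omega}\big) e^{\omega t}$ satisfies: $\rho_0/\Gamma(t) \to 0$ as $t \to \infty$ whenever $u_0' > -(1 - \rho_0/c)\omega$, and moreover in that case $e^{\omega t} \cdot \rho_0/\Gamma(t)$ converges to the finite limit $\dfrac{2\rho_0 \omega}{(1 - \rho_0/c)\omega + u_0'}$. -/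

import Mathlib

open Filter

theorem density_decay_attractive
    (c k ρ0 u0' : ℝ) (hc : 0 < c) (hk : k < 0) (hρ0 : 0 < ρ0)
    (ω : ℝ) (hω : ω = Real.sqrt (-(c * k)))
    (hthresh : u0' ≥ -(1 - ρ0 / c) * ω)
    (Γ : ℝ → ℝ)
    (hΓ : ∀ t, Γ t = ρ0 / c
        + 1 / 2 * (1 - ρ0 / c - u0' / ω) * Real.exp (-(ω * t))
        + 1 / 2 * (1 - ρ0 / c + u0' / ω) * Real.exp (ω * t)) :
    (u0' > -(1 - ρ0 / c) * ω →
      Tendsto (fun t => ρ0 / Γ t) atTop (nhds 0)) ∧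
    (u0' > -(1 - ρ0 / c) * ω →
      Tendsto (fun t => Real.exp (ω * t) * (ρ0 / Γ t)) atTop
        (nhds (2 * ρ0 * ω / ((1 - ρ0 / c) * ω + u0')))) := by
  have hωpos : 0 < ω := by
    rw [hω]
    exact Real.sqrt_pos.mpr (by nlinarith [mul_neg_of_pos_of_neg hc hk])
  have hE : Tendsto (fun t : ℝ => Real.exp (-(ω * t))) atTop (nhds 0) :=
    Real.tendsto_exp_neg_atTop_nhds_zero.comp (tendsto_id.const_mul_atTop hωpos)
  have key : u0' > -(1 - ρ0 / c) * ω →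
      Tendsto (fun t => Real.exp (ω * t) * (ρ0 / Γ t)) atTop
        (nhds (2 * ρ0 * ω / ((1 - ρ0 / c) * ω + u0'))) := by
    intro h
    have hpos : 0 < (1 - ρ0 / c) * ω + u0' := by linarith
    have hd : 1 / 2 * (1 - ρ0 / c + u0' / ω) = ((1 - ρ0 / c) * ω + u0') / (2 * ω) := by
      generalize ρ0 / c = r
      field_simp
    have hdpos : 0 < 1 / 2 * (1 - ρ0 / c + u0' / ω) := by
      rw [hd]; positivity
    have hlim : Tendsto (fun t : ℝ => ρ0 / (ρ0 / c * Real.exp (-(ω * t))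
        + 1 / 2 * (1 - ρ0 / c - u0' / ω) * (Real.exp (-(ω * t))) ^ 2
        + 1 / 2 * (1 - ρ0 / c + u0' / ω))) atTop
        (nhds (ρ0 / (ρ0 / c * 0 + 1 / 2 * (1 - ρ0 / c - u0' / ω) * 0 ^ 2
        + 1 / 2 * (1 - ρ0 / c + u0' / ω)))) := by
      refine Tendsto.div tendsto_const_nhds
        (((hE.const_mul _).add ((hE.pow 2).const_mul _)).add tendsto_const_nhds) ?_
      simpa using hdpos.ne'
    have hval : ρ0 / (ρ0 / c * 0 + 1 / 2 * (1 - ρ0 / c - u0' / ω) * 0 ^ 2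
        + 1 / 2 * (1 - ρ0 / c + u0' / ω)) = 2 * ρ0 * ω / ((1 - ρ0 / c) * ω + u0') := by
      rw [hd]
      have := hpos.ne'
      generalize hD : (1 - ρ0 / c) * ω + u0' = D at *
      rw [mul_zero, zero_pow two_ne_zero, mul_zero, zero_add, zero_add, div_div_eq_mul_div]
      ring
    rw [hval] at hlim
    refine hlim.congr fun t => ?_
    have hx : Real.exp (ω * t) ≠ 0 := (Real.exp_pos _).ne'
    have hg : ρ0 / c * Real.exp (-(ω * t))
        + 1 / 2 * (1 - ρ0 / c - u0' / ω) * (Real.exp (-(ω * t))) ^ 2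
        + 1 / 2 * (1 - ρ0 / c + u0' / ω) = Γ t / Real.exp (ω * t) := by
      rw [hΓ, Real.exp_neg, eq_div_iff hx]
      generalize ρ0 / c = r
      generalize u0' / ω = s
      field_simp
    rw [hg, div_div_eq_mul_div]
    ring
  refine ⟨fun h => ?_, key⟩
  have := hE.mul (key h)
  rw [zero_mul] at this
  refine this.congr fun t => ?_
  rw [← mul_assoc, ← Real.exp_add, neg_add_cancel, Real.exp_zero, one_mul]
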